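/- (Lemma on additive duals.) Let S = (S_j)_{0≤j≤T} be a supermartingale with S_0 = 0 such that Z_j − Y*_0 ≤ S_j almost surely for all 1 ≤ j ≤ T. Then Y*_0 = max_{0≤j≤T} (Z_j − S_j) almost surely. -/

import Mathlib

open MeasureTheory Filter Finset

/-!
Put `M = max_{0 ≤ j ≤ T} (Z j - S j)`. The domination hypothesis, together with `Z 0 ≤ Y 0` and
`S 0 = 0`, says that `M ≤ Y 0` almost surely. Conversely, `S` being a supermartingale, backward
induction along the Snell recursion gives `Y i - S i ≤ E[M | 𝓕 i]` for every `i`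
(`snell_sub_le_condExp`); at `i = 0` this yields `E[Y 0] ≤ E[M]` upon integrating. Two integrable
variables with `M ≤ Y 0` and `E[Y 0] ≤ E[M]` agree almost surely.
-/

theorem integrable_finset_sup' {Ω ι : Type*} {m0 : MeasurableSpace Ω} {μ : Measure Ω}
    {s : Finset ι} (hs : s.Nonempty) {f : ι → Ω → ℝ} (hf : ∀ i ∈ s, Integrable (f i) μ) :
    Integrable (fun ω => s.sup' hs (fun i => f i ω)) μ := by
  have h : Integrable (s.sup' hs f) μ :=
    Finset.sup'_induction hs f (p := fun g => Integrable g μ) (fun _ h₁ _ h₂ => h₁.sup h₂) hf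
  refine h.congr (Eventually.of_forall fun ω => ?_)
  exact Finset.sup'_apply hs f ω

theorem integrable_snell {Ω : Type*} {m0 : MeasurableSpace Ω} {μ : Measure Ω}
    {T : ℕ} {𝓕 : Filtration ℕ m0} {Z Y : ℕ → Ω → ℝ}
    (hZint : ∀ i, i ≤ T → Integrable (Z i) μ)
    (hYT : Y T = Z T)
    (hYrec : ∀ i, i < T → Y i =ᵐ[μ] fun ω => max (Z i ω) ((μ[Y (i + 1)|𝓕 i]) ω))
    {i : ℕ} (hi : i ≤ T) : Integrable (Y i) μ := by
  rcases hi.lt_or_eq with h | rfl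
  · exact ((hZint i hi).sup integrable_condExp).congr (hYrec i h).symm
  · exact hYT ▸ hZint i le_rfl

/-- Dual bound: if an integrable `M` dominates every `Z j - S j`, where `S` is a
supermartingale, then the Snell envelope of `Z` satisfies `Y i - S i ≤ E[M | 𝓕 i]`. The reason is
that `E[M | 𝓕 ·]` is a martingale, so `S + E[M | 𝓕 ·]` is a supermartingale dominating `Z`, and
the Snell envelope is the smallest such process. -/
theorem snell_sub_le_condExp {Ω : Type*} {m0 : MeasurableSpace Ω} {μ : Measure Ω}
    [IsFiniteMeasure μ] {T : ℕ} {𝓕 : Filtration ℕ m0} {Z Y S : ℕ → Ω → ℝ} {M : Ω → ℝ}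
    (hZadp : ∀ i, i ≤ T → StronglyMeasurable[𝓕 i] (Z i))
    (hZint : ∀ i, i ≤ T → Integrable (Z i) μ)
    (hYT : Y T = Z T)
    (hYrec : ∀ i, i < T → Y i =ᵐ[μ] fun ω => max (Z i ω) ((μ[Y (i + 1)|𝓕 i]) ω))
    (hSadp : ∀ i, i ≤ T → StronglyMeasurable[𝓕 i] (S i))
    (hSint : ∀ i, i ≤ T → Integrable (S i) μ)
    (hSsuper : ∀ i, i + 1 ≤ T → μ[S (i + 1)|𝓕 i] ≤ᵐ[μ] S i)
    (hMint : Integrable M μ)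
    (hM : ∀ i, i ≤ T → Z i - S i ≤ᵐ[μ] M)
    {i : ℕ} (hi : i ≤ T) : Y i - S i ≤ᵐ[μ] μ[M|𝓕 i] := by
  have hZS : ∀ j, j ≤ T → Z j - S j ≤ᵐ[μ] μ[M|𝓕 j] := fun j hj => by
    have h := condExp_mono (m := 𝓕 j) ((hZint j hj).sub (hSint j hj)) hMint (hM j hj)
    rwa [condExp_of_stronglyMeasurable (𝓕.le j) ((hZadp j hj).sub (hSadp j hj))
      ((hZint j hj).sub (hSint j hj))] at h
  induction hi using Nat.decreasingInduction with
  | self => exact hYT ▸ hZS T le_rfl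
  | of_succ i hi ih =>
    have hYint : Integrable (Y (i + 1)) μ := integrable_snell hZint hYT hYrec hi
    have hmono := condExp_mono (m := 𝓕 i) (hYint.sub (hSint _ hi)) integrable_condExp ih
    have htower := condExp_condExp_of_le (μ := μ) (f := M) (𝓕.mono i.le_succ) (𝓕.le (i + 1))
    filter_upwards [hmono, htower, condExp_sub hYint (hSint _ hi) (𝓕 i), hSsuper i hi,
      hYrec i hi, hZS i hi.le] with ω h₁ h₂ h₃ h₄ h₅ h₆
    simp only [Nat.succ_eq_add_one, Pi.sub_apply] at *
    rw [h₅, sub_le_iff_le_add]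
    exact max_le (by linarith) (by linarith)

/-- **Lemma on additive duals.**
Let `S` be a supermartingale (on the horizon `{0,…,T}`) with `S 0 = 0` such that
`Z j - Y 0 ≤ S j` a.s. for all `1 ≤ j ≤ T`. Then `Y 0 = max_{0 ≤ j ≤ T} (Z j - S j)` a.s.,
where `Y` is the Snell envelope of `Z`. -/
theorem snell_eq_dual_max_of_dominating_supermartingale
    {Ω : Type*} {m0 : MeasurableSpace Ω} (μ : Measure Ω) [IsProbabilityMeasure μ]
    (T : ℕ) (𝓕 : Filtration ℕ m0) (Z Y S : ℕ → Ω → ℝ)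
    -- `Z` is adapted, nonnegative and integrable on the horizon
    (hZadp : ∀ i, i ≤ T → StronglyMeasurable[𝓕 i] (Z i))
    (hZnn : ∀ i, i ≤ T → 0 ≤ᵐ[μ] Z i)
    (hZint : ∀ i, i ≤ T → Integrable (Z i) μ)
    -- `Y` is the Snell envelope of `Z`, given by backward recursion
    (hYT : Y T = Z T)
    (hYrec : ∀ i, i < T → Y i =ᵐ[μ] fun ω => max (Z i ω) ((μ[Y (i + 1)|𝓕 i]) ω))
    -- `S` is a supermartingale on the horizon `{0,…,T}` starting at `0`
    (hSadp : ∀ i, i ≤ T → StronglyMeasurable[𝓕 i] (S i))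
    (hSint : ∀ i, i ≤ T → Integrable (S i) μ)
    (hSsuper : ∀ i, i + 1 ≤ T → μ[S (i + 1)|𝓕 i] ≤ᵐ[μ] S i)
    (hS0 : S 0 = 0)
    -- `S` dominates `Z j - Y 0`
    (hdom : ∀ j, 1 ≤ j → j ≤ T → (fun ω => Z j ω - Y 0 ω) ≤ᵐ[μ] S j) :
    Y 0 =ᵐ[μ]
      fun ω => (Finset.Icc 0 T).sup' (Finset.nonempty_Icc.mpr (Nat.zero_le T))
        (fun j => Z j ω - S j ω) := by
  set M : Ω → ℝ := fun ω => (Finset.Icc 0 T).sup' (Finset.nonempty_Icc.mpr (Nat.zero_le T))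
    (fun j => Z j ω - S j ω) with hMdef
  have hMint : Integrable M μ :=
    integrable_finset_sup' _ fun j hj =>
      (hZint j (Finset.mem_Icc.mp hj).2).sub (hSint j (Finset.mem_Icc.mp hj).2)
  have hYint : Integrable (Y 0) μ := integrable_snell hZint hYT hYrec (Nat.zero_le T)
  have hle_M : ∀ i, i ≤ T → Z i - S i ≤ᵐ[μ] M := fun i hi => Eventually.of_forall fun ω =>
    Finset.le_sup' (fun j => Z j ω - S j ω) (Finset.mem_Icc.mpr ⟨Nat.zero_le i, hi⟩)
  have hZY : Z 0 ≤ᵐ[μ] Y 0 := by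
    rcases Nat.eq_zero_or_pos T with rfl | hT
    · rw [hYT]
    · filter_upwards [hYrec 0 hT] with ω h
      exact h ▸ le_max_left _ _
  have hM_le : M ≤ᵐ[μ] Y 0 := by
    have hall : ∀ᵐ ω ∂μ, ∀ j, 1 ≤ j → j ≤ T → Z j ω - Y 0 ω ≤ S j ω := by
      simp only [ae_all_iff]
      exact hdom
    filter_upwards [hall, hZY] with ω h h0
    refine Finset.sup'_le _ _ fun j hj => ?_
    rcases Nat.eq_zero_or_pos j with rfl | hj0
    · simpa [hS0] using h0
    · linarith [h j hj0 (Finset.mem_Icc.mp hj).2]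
  have hY_le : Y 0 ≤ᵐ[μ] μ[M|𝓕 0] := by
    simpa [hS0] using snell_sub_le_condExp hZadp hZint hYT hYrec hSadp hSint hSsuper hMint
      hle_M (Nat.zero_le T)
  have hint : ∫ ω, Y 0 ω ∂μ ≤ ∫ ω, M ω ∂μ :=
    (integral_mono_ae hYint integrable_condExp hY_le).trans_eq (integral_condExp (𝓕.le 0))
  exact ((integral_eq_iff_of_ae_le hMint hYint hM_le).mp
    (le_antisymm (integral_mono_ae hMint hYint hM_le) hint)).symm
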